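/- Let n' ≥ 1 and write n' = 2^{l'} · m' with m' odd. Let p_0 ∈ F_2[x] be a monic irreducible polynomial of type (D,n') having a root α ∈ F_{2^{n'}} which is not θ-periodic. Then there exist an integer s' with 1 ≤ s' ≤ l'+1 and monic irreducible polynomials p_0, p_1, …, p_{s'} of degree n' over F_2 such that p_{i+1} divides p_i^Q for every 0 ≤ i < s', each p_i with i < s' is of type (D,n'), and p_{s'} is of type (A,n'). -/

import Mathlib

open Polynomial

noncomputable def Qtrans (f : Polynomial (ZMod 2)) : Polynomial (ZMod 2) :=
  ∑ i ∈ Finset.range (f.natDegree + 1),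
    C (f.coeff i) * X ^ (f.natDegree - i) * (X ^ 2 + 1) ^ i

/-- The map `θ(x) = x + x⁻¹` (with the convention `0⁻¹ = 0`). -/
def theta {K : Type*} [Field K] (x : K) : K := x + x⁻¹

/-- An element is `θ`-periodic if some positive iterate of `θ` fixes it. -/
def ThetaPeriodic {K : Type*} [Field K] (α : K) : Prop :=
  ∃ k : ℕ, 1 ≤ k ∧ theta^[k] α = α

/-!
On the Koblitz curve `y² + xy = x³ + 1` over `F₂` the endomorphism `φ = 1 + Frobenius` acts on
`x`-coordinates as `θ`, and it satisfies `φ² = φ - 2`. Hence `Frobenius = φ - 1 = 1 + φ²`. Since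
`φ` divides `2`, raising to an odd power preserves a congruence `F ≡ 1 + φᵏ mod φᵏ⁺¹`; since
`2 = φ(1 - φ)`, squaring turns it into `F² ≡ 1 + φᵏ⁺¹ mod φᵏ⁺²`. If `K` has degree `2 ^ l * m`
over `F₂` with `m` odd, then Frobenius to the power `2 ^ l * m` is the identity on `K`-points, so
`1 ≡ 1 + φˡ⁺² mod φˡ⁺³`. Thus `φˡ⁺³` divides `φˡ⁺²`, and on the finite group of `K`-points the
`(l + 2)`-nd iterate of `φ` maps every point to a `φ`-periodic one: `θˡ⁺²(x)` is `θ`-periodic for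
every `x`-coordinate `x` of a `K`-point.

By Artin-Schreier theory, a nonzero `x` with `Tr x⁻¹ = Tr x` is such an `x`-coordinate, and if both
traces vanish, then `x = θ(c)` for some `c` with again `Tr c⁻¹ = Tr c`. Starting from a root of a
polynomial of type (D) that is not `θ`-periodic, taking preimages repeatedly must therefore reach
trace `1`, that is, a root of a polynomial of type (A), within `l + 1` steps. The minimal
polynomials of the successive preimages form the required chain.
-/

section EventuallyPeriodicPowers

theorem exists_pow_add_eq_pow_of_pow_succ_dvd {M : Type*} [CommMonoid M] [Finite M] {t : M} {N : ℕ}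
    (h : t ^ (N + 1) ∣ t ^ N) : ∃ d, 0 < d ∧ t ^ (N + d) = t ^ N := by
  obtain ⟨u, hu⟩ := h
  have absorb (k : ℕ) : t ^ N = t ^ N * (t * u) ^ k := by
    induction k with
    | zero => rw [pow_zero, mul_one]
    | succ k ih => rw [pow_succ, ← mul_assoc, ← ih, ← mul_assoc, ← pow_succ, ← hu]
  obtain ⟨a, b, hab, hpow⟩ : ∃ a b, a < b ∧ t ^ a = t ^ b := by
    obtain ⟨a, b, hne, heq⟩ := Finite.exists_ne_map_eq_of_infinite (t ^ · : ℕ → M)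
    exact hne.lt_or_gt.elim (⟨a, b, ·, heq⟩) (⟨b, a, ·, heq.symm⟩)
  refine ⟨b - a, Nat.sub_pos_of_lt hab, ?_⟩
  calc t ^ (N + (b - a)) = t ^ N * t ^ (b - a) := pow_add ..
    _ = t ^ N * (t * u) ^ a * t ^ (b - a) := by rw [← absorb]
    _ = t ^ N * u ^ a * t ^ (a + (b - a)) := by rw [mul_pow, pow_add]; ac_rfl
    _ = t ^ N * (t * u) ^ a := by rw [Nat.add_sub_cancel' hab.le, ← hpow, mul_pow]; ac_rfl
    _ = t ^ N := (absorb a).symm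

variable {R : Type*} [CommRing R] {t x : R} {k : ℕ}

theorem pow_succ_dvd_pow_sub_one_add_pow_of_odd (h2 : t ∣ 2) (hk : 0 < k)
    (hx : t ^ (k + 1) ∣ x - (1 + t ^ k)) {m : ℕ} (hm : Odd m) :
    t ^ (k + 1) ∣ x ^ m - (1 + t ^ k) := by
  obtain ⟨j, rfl⟩ := hm
  have hsub : t ^ k ∣ x - 1 := by
    have := dvd_add ((pow_dvd_pow t k.le_succ).trans hx) (dvd_refl (t ^ k))
    rwa [show x - (1 + t ^ k) + t ^ k = x - 1 by ring] at this
  have hadd : t ∣ x + 1 := by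
    have := dvd_add ((dvd_pow_self t hk.ne').trans hsub) h2
    rwa [show x - 1 + 2 = x + 1 by ring] at this
  have hsq : t ^ (k + 1) ∣ (x ^ 2) ^ j - 1 := by
    refine Dvd.dvd.trans ?_ (sub_one_dvd_pow_sub_one (x ^ 2) j)
    rw [show x ^ 2 - 1 = (x - 1) * (x + 1) by ring, pow_succ]
    exact mul_dvd_mul hsub hadd
  rw [show x ^ (2 * j + 1) - (1 + t ^ k) = x * ((x ^ 2) ^ j - 1) + (x - (1 + t ^ k)) by ring]
  exact dvd_add (hsq.mul_left x) hx

theorem pow_succ_dvd_sq_sub_one_add_pow (ht : t ^ 2 = t - 2) (hk : 2 ≤ k)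
    (hx : t ^ (k + 1) ∣ x - (1 + t ^ k)) :
    t ^ (k + 2) ∣ x ^ 2 - (1 + t ^ (k + 1)) := by
  obtain ⟨w, hw⟩ := hx
  obtain ⟨j, rfl⟩ := Nat.exists_eq_add_of_le' hk
  refine ⟨-1 + w * (1 - t) + t ^ j * (1 + t * w) ^ 2, ?_⟩
  rw [sub_eq_iff_eq_add.mp hw]
  linear_combination t ^ (j + 2) * (1 + t * w) * ht

theorem pow_succ_dvd_one_add_sq_pow_sub (ht : t ^ 2 = t - 2) (l : ℕ) {m : ℕ} (hm : Odd m) :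
    t ^ (l + 2 + 1) ∣ (1 + t ^ 2) ^ (2 ^ l * m) - (1 + t ^ (l + 2)) := by
  have h2 : t ∣ 2 := ⟨1 - t, by linear_combination ht⟩
  rw [pow_mul]
  refine pow_succ_dvd_pow_sub_one_add_pow_of_odd h2 (by lia) ?_ hm
  induction l with
  | zero => simp
  | succ l ih =>
    rw [pow_succ 2 l, pow_mul]
    exact pow_succ_dvd_sq_sub_one_add_pow ht (by lia) ih

open scoped IsMulCommutative in
theorem exists_pow_add_eq_pow_of_sq_eq_sub_two {A : Type*} [Ring A] [Finite A] {t : A}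
    (ht : t ^ 2 = t - 2) {l m : ℕ} (hm : Odd m) (hone : (t - 1) ^ (2 ^ l * m) = 1) :
    ∃ d, 0 < d ∧ t ^ (l + 2 + d) = t ^ (l + 2) := by
  let u : Algebra.adjoin ℤ {t} := ⟨t, Algebra.self_mem_adjoin_singleton ℤ t⟩
  have hu : u ^ 2 = u - 2 := Subtype.ext ht
  have hu_one : (1 + u ^ 2) ^ (2 ^ l * m) = 1 := by
    rw [show 1 + u ^ 2 = u - 1 by rw [hu]; ring]
    exact Subtype.ext hone
  have hdvd := pow_succ_dvd_one_add_sq_pow_sub hu l hm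
  rw [hu_one, sub_add_cancel_left, dvd_neg] at hdvd
  obtain ⟨d, hd, h⟩ := exists_pow_add_eq_pow_of_pow_succ_dvd hdvd
  exact ⟨d, hd, congrArg Subtype.val h⟩

end EventuallyPeriodicPowers

section FiniteFields

open IntermediateField

theorem trace_eq_neg_nextCoeff_minpoly {F K : Type*} [Field F] [Field K] [Algebra F K]
    [FiniteDimensional F K] {x : K} (hx : F⟮x⟯ = ⊤) :
    Algebra.trace F K x = -(minpoly F x).nextCoeff := by
  rw [trace_eq_finrank_mul_minpoly_nextCoeff, hx, IntermediateField.finrank_top,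
    Nat.cast_one, one_mul]

theorem adjoin_simple_inv {F K : Type*} [Field F] [Field K] [Algebra F K] (x : K) :
    F⟮x⁻¹⟯ = F⟮x⟯ :=
  le_antisymm (adjoin_simple_le_iff.2 (inv_mem (mem_adjoin_simple_self F x)))
    (adjoin_simple_le_iff.2 (by simpa using inv_mem (mem_adjoin_simple_self F x⁻¹)))

theorem nextCoeff_minpoly_inv {F K : Type*} [Field F] [Field K] [Algebra F K] {x : K}
    (hx : IsIntegral F x) (hx0 : x ≠ 0) :
    (minpoly F x⁻¹).nextCoeff = (minpoly F x⁻¹).coeff 0 * (minpoly F x).coeff 1 := by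
  set q := minpoly F x⁻¹
  have hq0 : q.coeff 0 ≠ 0 := minpoly.coeff_zero_ne_zero hx.inv (inv_ne_zero hx0)
  have hdvd : minpoly F x ∣ q.reverse := by
    let _ : Invertible x⁻¹ := invertibleOfNonzero (inv_ne_zero hx0)
    refine minpoly.dvd F x ?_
    simpa [aeval_def] using
      (eval₂_reverse_eq_zero_iff (algebraMap F K) x⁻¹ q).2 (minpoly.aeval F x⁻¹)
  have hdeg : q.reverse.natDegree ≤ (minpoly F x).natDegree := by
    rw [← adjoin.finrank hx, ← adjoin_simple_inv, adjoin.finrank hx.inv]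
    exact reverse_natDegree_le q
  have hrev := eq_leadingCoeff_mul_of_monic_of_dvd_of_natDegree_le (minpoly.monic hx) hdvd hdeg
  have hlead : q.reverse.leadingCoeff = q.coeff 0 := by
    rw [reverse_leadingCoeff, trailingCoeff, natTrailingDegree_eq_zero.2 (.inr hq0)]
  rw [← coeff_one_reverse, hrev, coeff_C_mul, hlead]

theorem trace_pow_card {F K : Type*} [Field F] [Fintype F] [Field K] [Algebra F K]
    [Algebra.IsAlgebraic F K] (x : K) :
    Algebra.trace F K (x ^ Fintype.card F) = Algebra.trace F K x :=
  Algebra.trace_eq_of_algEquiv (FiniteField.frobeniusAlgEquivOfAlgebraic F K) x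

theorem pow_card_eq_self_iff_mem_range_algebraMap {F K : Type*} [Field F] [Fintype F] [Field K]
    [Finite K] [Algebra F K] {z : K} :
    z ^ Fintype.card F = z ↔ z ∈ Set.range (algebraMap F K) := by
  refine ⟨fun hz ↦ (IsGalois.mem_range_algebraMap_iff_fixed z).2 fun σ ↦ ?_, ?_⟩
  · obtain ⟨j, rfl⟩ := (FiniteField.bijective_frobeniusAlgEquivOfAlgebraic_pow F K).2 σ
    rw [AlgEquiv.coe_pow]
    exact Function.iterate_fixed hz j
  · rintro ⟨a, rfl⟩
    rw [← map_pow, FiniteField.pow_card]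

theorem exists_pow_card_sub_eq_of_trace_eq_zero {F K : Type*} [Field F] [Fintype F] [Field K]
    [Finite K] [Algebra F K] {c : K} (hc : Algebra.trace F K c = 0) :
    ∃ z : K, z ^ Fintype.card F - z = c := by
  let f : K →ₗ[F] K := (FiniteField.frobeniusAlgHom F K).toLinearMap - LinearMap.id
  have hker : LinearMap.ker f = Submodule.span F {1} := by
    ext z
    rw [← Submodule.one_eq_span, Submodule.mem_one, LinearMap.mem_ker]
    exact sub_eq_zero.trans pow_card_eq_self_iff_mem_range_algebraMap
  have hle : LinearMap.range f ≤ LinearMap.ker (Algebra.trace F K) := by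
    rintro _ ⟨z, rfl⟩
    simp [f, trace_pow_card]
  have hrange : LinearMap.range f = LinearMap.ker (Algebra.trace F K) := by
    refine Submodule.eq_of_le_of_finrank_eq hle ?_
    have hf := LinearMap.finrank_range_add_finrank_ker f
    have htr := LinearMap.finrank_range_add_finrank_ker (Algebra.trace F K)
    rw [hker, finrank_span_singleton one_ne_zero] at hf
    rw [LinearMap.range_eq_top.2 (Algebra.trace_surjective F K), finrank_top,
      Module.finrank_self] at htr
    lia
  exact hrange.ge hc

end FiniteFields

section KoblitzCurve

open WeierstrassCurve Affine

/-- The group endomorphisms of the `K`-points of a curve over `F` induced by the `F`-algebra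
endomorphisms of `K`, as a monoid homomorphism; it turns powers of the Frobenius map of `K` into
powers of the Frobenius endomorphism of the curve. -/
noncomputable def pointEnd {F K : Type*} [Field F] [Field K] [Algebra F K] [DecidableEq K]
    (W : WeierstrassCurve F) : (K →ₐ[F] K) →* AddMonoid.End (W⁄K).Point where
  toFun := Point.map
  map_one' := by ext (_ | _) <;> rfl
  map_mul' f g := by ext P; exact (Point.map_map g f P).symm

theorem finite_point {K : Type*} [CommRing K] [Finite K] (W : Affine K) : Finite W.Point :=
  have : Finite (WithZero {xy : K × K // W.Nonsingular xy.1 xy.2}) :=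
    inferInstanceAs (Finite (Option _))
  .of_equiv _ (nonsingularPointEquiv W).symm

/-- The Koblitz curve `y ^ 2 + x * y = x ^ 3 + 1` over `F₂`. -/
def koblitzCurve : WeierstrassCurve (ZMod 2) := ⟨1, 0, 0, 0, 1⟩

instance : koblitzCurve.IsElliptic := ⟨by
  rw [isUnit_iff_ne_zero]; decide⟩

variable {K : Type*} [Field K] [Algebra (ZMod 2) K]

instance : (koblitzCurve⁄K).IsElliptic :=
  inferInstanceAs (koblitzCurve.map _).IsElliptic

theorem charP_two_of_algebra_zmod (K : Type*) [Field K] [Algebra (ZMod 2) K] : CharP K 2 :=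
  charP_of_injective_algebraMap (algebraMap (ZMod 2) K).injective 2

theorem koblitzCurve_baseChange : koblitzCurve⁄K = ⟨1, 0, 0, 0, 1⟩ := by
  simp [WeierstrassCurve.baseChange, koblitzCurve, WeierstrassCurve.map]

theorem koblitzCurve_equation_iff {x y : K} :
    (koblitzCurve⁄K).Equation x y ↔ y ^ 2 + x * y = x ^ 3 + 1 := by
  rw [koblitzCurve_baseChange, equation_iff]
  simp only [one_mul, zero_mul, add_zero]

theorem koblitzCurve_negY (x y : K) : (koblitzCurve⁄K).negY x y = -y - x := by
  rw [koblitzCurve_baseChange, negY]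
  ring

theorem koblitzCurve_addX (x₁ x₂ ℓ : K) : (koblitzCurve⁄K).addX x₁ x₂ ℓ = ℓ ^ 2 + ℓ - x₁ - x₂ := by
  rw [koblitzCurve_baseChange, addX]
  ring

theorem koblitzCurve_Y_ne_negY {x : K} (hx : x ≠ 0) (y : K) : y ≠ (koblitzCurve⁄K).negY x y := by
  have := charP_two_of_algebra_zmod K
  rw [koblitzCurve_negY]
  grind

theorem eq_one_of_koblitzCurve_equation_zero {y : K} (h : (koblitzCurve⁄K).Equation 0 y) :
    y = 1 := by
  have := charP_two_of_algebra_zmod K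
  have : (y - 1) ^ 2 = 0 := by
    rw [koblitzCurve_equation_iff] at h
    grind
  grind

/-- The `x`-coordinate of a point. The value `0` at infinity is chosen so that `xCoord` intertwines
`1 + Frobenius` with `theta`: the point at infinity and the point above `x = 0` both map to
infinity, and `theta 0 = 0`. -/
def xCoord : (koblitzCurve⁄K).Point → K
  | .zero => 0
  | .some x _ _ => x

theorem xCoord_zero : xCoord (0 : (koblitzCurve⁄K).Point) = 0 := rfl

section GroupLaw

variable [DecidableEq K]

theorem koblitzCurve_slope_self {x y : K} (hx : x ≠ 0) :
    (koblitzCurve⁄K).slope x x y y = x + y / x := by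
  have := charP_two_of_algebra_zmod K
  rw [slope_of_Y_ne rfl (koblitzCurve_Y_ne_negY hx y), koblitzCurve_negY, koblitzCurve_baseChange]
  simp only [mul_zero, zero_mul, add_zero, one_mul]
  grind

theorem koblitzCurve_slope_sq {x y : K} (h : (koblitzCurve⁄K).Equation x y) (hx : x ≠ 0) :
    (koblitzCurve⁄K).slope (x ^ 2) x (y ^ 2) y = (x ^ 2 + x + 1 + y) / x := by
  have := charP_two_of_algebra_zmod K
  have heq := koblitzCurve_equation_iff.1 h
  by_cases hsq : x ^ 2 = x
  · obtain rfl : x = 1 := by simpa [sq, hx] using hsq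
    have hy : y ^ 2 = y := by grind
    rw [one_pow, hy, koblitzCurve_slope_self one_ne_zero]
    grind
  · rw [slope_of_X_ne hsq, div_eq_div_iff (sub_ne_zero.2 hsq) hx]
    grind

variable (K) in
/-- The Frobenius endomorphism `(x, y) ↦ (x ^ 2, y ^ 2)` of the Koblitz curve. -/
noncomputable def koblitzFrobenius : AddMonoid.End (koblitzCurve⁄K).Point :=
  pointEnd koblitzCurve (FiniteField.frobeniusAlgHom (ZMod 2) K)

theorem koblitzFrobenius_pow_finrank [Finite K] :
    koblitzFrobenius K ^ Module.finrank (ZMod 2) K = 1 := by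
  rw [koblitzFrobenius, ← map_pow, ← FiniteField.orderOf_frobeniusAlgHom, pow_orderOf_eq_one,
    map_one]

theorem exists_koblitzFrobenius_some_eq {x y : K} (h : (koblitzCurve⁄K).Nonsingular x y) :
    ∃ h', koblitzFrobenius K (.some x y h) = .some (x ^ 2) (y ^ 2) h' :=
  ⟨_, rfl⟩

theorem koblitz_add_self_of_X_eq_zero {y : K} (h : (koblitzCurve⁄K).Nonsingular 0 y) :
    (.some 0 y h + .some 0 y h : (koblitzCurve⁄K).Point) = 0 := by
  have := charP_two_of_algebra_zmod K
  refine Point.add_self_of_Y_eq ?_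
  rw [koblitzCurve_negY]
  grind

theorem koblitzFrobenius_add_self_of_X_eq_zero {y : K} (h : (koblitzCurve⁄K).Nonsingular 0 y) :
    koblitzFrobenius K (.some 0 y h) + .some 0 y h = 0 := by
  obtain rfl := eq_one_of_koblitzCurve_equation_zero h.1
  obtain ⟨h', hF⟩ := exists_koblitzFrobenius_some_eq h
  have hfix : koblitzFrobenius K (.some 0 1 h) = .some 0 1 h := by
    simp [hF]
  rw [hfix, koblitz_add_self_of_X_eq_zero]

theorem exists_koblitzFrobenius_add_self_eq {x y : K} (h : (koblitzCurve⁄K).Nonsingular x y)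
    (hx : x ≠ 0) :
    ∃ h', koblitzFrobenius K (.some x y h) + .some x y h =
      .some (x + x⁻¹) ((y + 1) * (1 + (x⁻¹) ^ 2) + x) h' := by
  have := charP_two_of_algebra_zmod K
  have heq := koblitzCurve_equation_iff.1 h.1
  have hne : ¬(x ^ 2 = x ∧ y ^ 2 = (koblitzCurve⁄K).negY x y) := by
    rintro ⟨hsq, hneg⟩
    rw [koblitzCurve_negY] at hneg
    grind
  obtain ⟨h', hF⟩ := exists_koblitzFrobenius_some_eq h
  have hX : (koblitzCurve⁄K).addX (x ^ 2) x ((x ^ 2 + x + 1 + y) / x) = x + x⁻¹ := by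
    rw [koblitzCurve_addX]
    grind
  have hY : (koblitzCurve⁄K).addY (x ^ 2) x (y ^ 2) ((x ^ 2 + x + 1 + y) / x) =
      (y + 1) * (1 + (x⁻¹) ^ 2) + x := by
    rw [addY, negAddY, hX, koblitzCurve_negY]
    grind
  have hadd : koblitzFrobenius K (.some x y h) + .some x y h = _ := hF ▸ Point.add_some hne
  have hns := nonsingular_add h' h hne
  simp only [koblitzCurve_slope_sq h.1 hx, hX, hY] at hadd hns
  exact ⟨hns, hadd⟩

theorem koblitz_add_self_eq_neg_koblitzFrobenius (P : (koblitzCurve⁄K).Point) :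
    P + P = -koblitzFrobenius K (koblitzFrobenius K P + P) := by
  have := charP_two_of_algebra_zmod K
  rcases P with _ | ⟨x, y, h⟩
  · simp [← Point.zero_def]
  rcases eq_or_ne x 0 with rfl | hx
  · rw [koblitz_add_self_of_X_eq_zero, koblitzFrobenius_add_self_of_X_eq_zero, map_zero, neg_zero]
  have heq := koblitzCurve_equation_iff.1 h.1
  obtain ⟨hφ, hφP⟩ := exists_koblitzFrobenius_add_self_eq h hx
  obtain ⟨hF, hFφP⟩ := exists_koblitzFrobenius_some_eq hφ
  have hX : (koblitzCurve⁄K).addX x x (x + y / x) = (x + x⁻¹) ^ 2 := by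
    rw [koblitzCurve_addX]
    grind
  rw [hφP, hFφP, Point.neg_some, Point.add_self_of_Y_ne (koblitzCurve_Y_ne_negY hx y)]
  simp only [Point.some.injEq, koblitzCurve_slope_self hx, addY, negAddY, hX, koblitzCurve_negY]
  refine ⟨trivial, ?_⟩
  grind

theorem koblitzFrobenius_add_one_sq :
    (koblitzFrobenius K + 1) ^ 2 = koblitzFrobenius K + 1 - 2 := by
  have hrel : 1 + 1 + koblitzFrobenius K * (koblitzFrobenius K + 1) = 0 := by
    ext P
    exact eq_neg_iff_add_eq_zero.1 (koblitz_add_self_eq_neg_koblitzFrobenius P)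
  rw [← sub_eq_zero, ← hrel]
  noncomm_ring

theorem semiconj_xCoord_theta :
    Function.Semiconj xCoord ⇑(koblitzFrobenius K + 1) (theta : K → K) := by
  intro P
  change xCoord (koblitzFrobenius K P + P) = theta (xCoord P)
  rcases P with _ | ⟨x, y, h⟩
  · simp [← Point.zero_def, xCoord_zero, theta]
  rcases eq_or_ne x 0 with rfl | hx
  · simp [koblitzFrobenius_add_self_of_X_eq_zero, xCoord, theta]
  · obtain ⟨h', hP⟩ := exists_koblitzFrobenius_add_self_eq h hx
    rw [hP]
    rfl

end GroupLaw

theorem thetaPeriodic_iterate_of_koblitzCurve_equation [Finite K] {l m : ℕ} (hm : Odd m)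
    (hfinrank : Module.finrank (ZMod 2) K = 2 ^ l * m) {x y : K}
    (h : (koblitzCurve⁄K).Equation x y) : ThetaPeriodic (theta^[l + 2] x) := by
  classical
  set φ := koblitzFrobenius K + 1
  have := finite_point (koblitzCurve⁄K)
  have : Finite (AddMonoid.End (koblitzCurve⁄K).Point) := DFunLike.finite _
  have hone : (φ - 1) ^ (2 ^ l * m) = 1 := by
    rw [← hfinrank, add_sub_cancel_right, koblitzFrobenius_pow_finrank]
  obtain ⟨d, hd, hpow⟩ :=
    exists_pow_add_eq_pow_of_sq_eq_sub_two koblitzFrobenius_add_one_sq hm hone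
  let P : (koblitzCurve⁄K).Point := .mk h
  have hP : φ^[l + 2] P ∈ Function.periodicPts φ := by
    refine ⟨d, hd, ?_⟩
    rw [Function.IsPeriodicPt, Function.IsFixedPt, ← Function.iterate_add_apply, add_comm d,
      ← AddMonoid.End.coe_pow, hpow, AddMonoid.End.coe_pow]
  have hx := semiconj_xCoord_theta.mapsTo_periodicPts hP
  rw [(semiconj_xCoord_theta.iterate_right (l + 2)).eq] at hx
  exact hx

end KoblitzCurve

section BackwardOrbits

theorem exists_backward_orbit_of_iterate_ne {X : Type*} {f : X → X} {p q : X → Prop}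
    (hstep : ∀ b, p b → q b → ∃ c, p c ∧ f c = b) {N : ℕ} :
    ∀ {a : X}, p a → (∀ c, p c → f^[N] c ≠ a) →
      ∃ s < N, ∃ b : ℕ → X, b 0 = a ∧ (∀ i ≤ s, p (b i)) ∧ (∀ i < s, f (b (i + 1)) = b i) ∧
        (∀ i < s, q (b i)) ∧ ¬q (b s) := by
  induction N with
  | zero => exact fun {a} ha hN ↦ absurd rfl (hN a ha)
  | succ N ih =>
    intro a ha hN
    by_cases hq : q a
    · obtain ⟨c, hc, rfl⟩ := hstep a ha hq
      have hNc (d : X) (hd : p d) : f^[N] d ≠ c := fun h ↦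
        hN d hd (by rw [Function.iterate_succ_apply', h])
      obtain ⟨s, hs, b, rfl, hp, hf, hqi, hqs⟩ := ih hc hNc
      refine ⟨s + 1, Nat.succ_lt_succ hs, fun i ↦ i.casesOn (f (b 0)) b, rfl, ?_, ?_, ?_, hqs⟩
      · rintro (_ | i) hi
        exacts [ha, hp i (Nat.le_of_succ_le_succ hi)]
      · rintro (_ | i) hi
        exacts [rfl, hf i (Nat.lt_of_succ_lt_succ hi)]
      · rintro (_ | i) hi
        exacts [hq, hqi i (Nat.lt_of_succ_lt_succ hi)]
    · exact ⟨0, N.succ_pos, fun _ ↦ a, rfl, fun _ _ ↦ ha, by simp, by simp, hq⟩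

end BackwardOrbits

section Descent

open IntermediateField WeierstrassCurve Affine

variable {K : Type*} [Field K] [Algebra (ZMod 2) K]

theorem map_theta {K L : Type*} [Field K] [Field L] (f : K →+* L) (x : K) :
    f (theta x) = theta (f x) := by
  simp only [theta, map_add, map_inv₀]

theorem ThetaPeriodic.map {K L : Type*} [Field K] [Field L] (f : K →+* L) {x : K}
    (hx : ThetaPeriodic x) : ThetaPeriodic (f x) :=
  Function.Semiconj.mapsTo_periodicPts (map_theta f) hx

theorem thetaPeriodic_zero (K : Type*) [Field K] : ThetaPeriodic (0 : K) :=
  ⟨1, le_rfl, by simp [theta]⟩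

theorem aeval_Qtrans (f : (ZMod 2)[X]) {x : K} (hx : x ≠ 0) :
    aeval x (Qtrans f) = x ^ f.natDegree * aeval (theta x) f := by
  rw [Qtrans, map_sum, aeval_eq_sum_range, Finset.mul_sum]
  refine Finset.sum_congr rfl fun i hi ↦ ?_
  have hpow : x ^ f.natDegree = x ^ (f.natDegree - i) * x ^ i :=
    (pow_sub_mul_pow x (Finset.mem_range_succ_iff.1 hi)).symm
  have htheta : x ^ 2 + 1 = x * theta x := by rw [theta, mul_add, mul_inv_cancel₀ hx, sq]
  simp only [map_mul, map_pow, map_add, map_one, aeval_C, aeval_X, Algebra.smul_def, hpow, htheta,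
    mul_pow]
  ring

theorem minpoly_dvd_Qtrans_minpoly_theta {x : K} (hx : x ≠ 0) :
    minpoly (ZMod 2) x ∣ Qtrans (minpoly (ZMod 2) (theta x)) :=
  minpoly.dvd _ _ (by rw [aeval_Qtrans _ hx, minpoly.aeval, mul_zero])

theorem adjoin_eq_top_of_adjoin_theta_eq_top {x : K} (hx : (ZMod 2)⟮theta x⟯ = ⊤) :
    (ZMod 2)⟮x⟯ = ⊤ :=
  have hmem := mem_adjoin_simple_self (ZMod 2) x
  top_unique (hx.ge.trans (adjoin_simple_le_iff.2 (add_mem hmem (inv_mem hmem))))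

theorem coeff_finrank_sub_one_minpoly [Finite K] {x : K} (hx : (ZMod 2)⟮x⟯ = ⊤) :
    (minpoly (ZMod 2) x).coeff (Module.finrank (ZMod 2) K - 1) = Algebra.trace (ZMod 2) K x := by
  have hdeg := (Field.primitive_element_iff_minpoly_natDegree_eq (ZMod 2) x).1 hx
  rw [trace_eq_neg_nextCoeff_minpoly hx, ZModModule.neg_eq_self, nextCoeff_of_natDegree_pos, hdeg]
  exact hdeg ▸ Module.finrank_pos

theorem coeff_one_minpoly [Finite K] {x : K} (hx : (ZMod 2)⟮x⟯ = ⊤) (hx0 : x ≠ 0) :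
    (minpoly (ZMod 2) x).coeff 1 = Algebra.trace (ZMod 2) K x⁻¹ := by
  have hint : IsIntegral (ZMod 2) x := .of_finite _ x
  have hne : (minpoly (ZMod 2) x⁻¹).coeff 0 ≠ 0 :=
    minpoly.coeff_zero_ne_zero hint.inv (inv_ne_zero hx0)
  have hone : (minpoly (ZMod 2) x⁻¹).coeff 0 = 1 := Fin.eq_one_of_ne_zero _ hne
  rw [trace_eq_neg_nextCoeff_minpoly ((adjoin_simple_inv x).trans hx),
    nextCoeff_minpoly_inv hint hx0, hone, one_mul, ZModModule.neg_eq_self]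

theorem trace_sq [Finite K] (x : K) :
    Algebra.trace (ZMod 2) K (x ^ 2) = Algebra.trace (ZMod 2) K x :=
  trace_pow_card x

theorem exists_sq_add_mul_eq_of_trace_eq_zero [Finite K] {b c : K} (hb : b ≠ 0)
    (h : Algebra.trace (ZMod 2) K (c / b ^ 2) = 0) : ∃ y : K, y ^ 2 + b * y = c := by
  have := charP_two_of_algebra_zmod K
  -- The substitution `y = b * z` leads to the Artin-Schreier equation `z ^ 2 + z = c / b ^ 2`.
  obtain ⟨z, hz⟩ := exists_pow_card_sub_eq_of_trace_eq_zero h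
  rw [ZMod.card, CharTwo.sub_eq_add, eq_div_iff (pow_ne_zero 2 hb)] at hz
  exact ⟨b * z, by linear_combination hz⟩

theorem exists_theta_eq_of_trace_inv_eq_zero [Finite K] {b : K} (hb : b ≠ 0)
    (h : Algebra.trace (ZMod 2) K b⁻¹ = 0) : ∃ c : K, theta c = b := by
  have := charP_two_of_algebra_zmod K
  obtain ⟨c, hc⟩ := exists_sq_add_mul_eq_of_trace_eq_zero hb (c := 1) (by
    rw [one_div, ← inv_pow, trace_sq, h])
  have hc0 : c ≠ 0 := by
    rintro rfl
    simp at hc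
  refine ⟨c, ?_⟩
  rw [theta]
  grind

theorem exists_koblitzCurve_equation_of_trace_inv_eq [Finite K] {x : K} (hx : x ≠ 0)
    (h : Algebra.trace (ZMod 2) K x⁻¹ = Algebra.trace (ZMod 2) K x) :
    ∃ y, (koblitzCurve⁄K).Equation x y := by
  simp only [koblitzCurve_equation_iff]
  refine exists_sq_add_mul_eq_of_trace_eq_zero hx ?_
  have hdiv : (x ^ 3 + 1) / x ^ 2 = x + x⁻¹ ^ 2 := by field_simp
  rw [hdiv, map_add, trace_sq, h, CharTwo.add_self_eq_zero]

/-- The nonzero generators `x` of `K` over `F₂` with `Tr x⁻¹ = Tr x`. They are the roots in `K` of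
the polynomials of degree `[K : F₂]` of type (D) (trace `0`) and of type (A) (trace `1`), and the
trace condition makes `x` the abscissa of a `K`-point of the Koblitz curve. -/
structure IsBalancedGenerator (x : K) : Prop where
  ne_zero : x ≠ 0
  adjoin_eq_top : (ZMod 2)⟮x⟯ = ⊤
  trace_inv : Algebra.trace (ZMod 2) K x⁻¹ = Algebra.trace (ZMod 2) K x

namespace IsBalancedGenerator

variable [Finite K] {x : K}

theorem exists_theta_eq (hx : IsBalancedGenerator x) (htr : Algebra.trace (ZMod 2) K x = 0) :
    ∃ c : K, IsBalancedGenerator c ∧ theta c = x := by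
  obtain ⟨c, rfl⟩ := exists_theta_eq_of_trace_inv_eq_zero hx.ne_zero (hx.trace_inv.trans htr)
  refine ⟨c, ⟨?_, adjoin_eq_top_of_adjoin_theta_eq_top hx.adjoin_eq_top, ?_⟩, rfl⟩
  · rintro rfl
    exact hx.ne_zero (by simp [theta])
  · rw [theta, map_add] at htr
    exact (CharTwo.add_eq_zero.1 htr).symm

theorem thetaPeriodic_iterate (hx : IsBalancedGenerator x) {l m : ℕ} (hm : Odd m)
    (hfinrank : Module.finrank (ZMod 2) K = 2 ^ l * m) : ThetaPeriodic (theta^[l + 2] x) := by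
  obtain ⟨y, hy⟩ := exists_koblitzCurve_equation_of_trace_inv_eq hx.ne_zero hx.trace_inv
  exact thetaPeriodic_iterate_of_koblitzCurve_equation hm hfinrank hy

theorem exists_backward_orbit (hx : IsBalancedGenerator x) (hper : ¬ThetaPeriodic x) {l m : ℕ}
    (hm : Odd m) (hfinrank : Module.finrank (ZMod 2) K = 2 ^ l * m) :
    ∃ s ≤ l + 1, ∃ b : ℕ → K, b 0 = x ∧ (∀ i ≤ s, IsBalancedGenerator (b i)) ∧
      (∀ i < s, theta (b (i + 1)) = b i) ∧ (∀ i < s, Algebra.trace (ZMod 2) K (b i) = 0) ∧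
      Algebra.trace (ZMod 2) K (b s) = 1 := by
  obtain ⟨s, hs, b, hb0, hb, htheta, htr, htrs⟩ :=
    exists_backward_orbit_of_iterate_ne (f := theta) (p := IsBalancedGenerator)
      (q := fun c : K ↦ Algebra.trace (ZMod 2) K c = 0)
      (fun c hc htr ↦ hc.exists_theta_eq htr) hx
      (fun c hc h ↦ hper (h ▸ hc.thetaPeriodic_iterate hm hfinrank))
  exact ⟨s, Nat.le_of_lt_succ hs, b, hb0, hb, htheta, htr, Fin.eq_one_of_ne_zero _ htrs⟩

theorem minpoly_spec (hx : IsBalancedGenerator x) :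
    (minpoly (ZMod 2) x).Monic ∧ Irreducible (minpoly (ZMod 2) x) ∧
      (minpoly (ZMod 2) x).natDegree = Module.finrank (ZMod 2) K :=
  have hint : IsIntegral (ZMod 2) x := .of_finite _ x
  ⟨minpoly.monic hint, minpoly.irreducible hint,
    (Field.primitive_element_iff_minpoly_natDegree_eq (ZMod 2) x).1 hx.adjoin_eq_top⟩

theorem minpoly_coeff_eq_trace (hx : IsBalancedGenerator x) :
    (minpoly (ZMod 2) x).coeff (Module.finrank (ZMod 2) K - 1) = Algebra.trace (ZMod 2) K x ∧
      (minpoly (ZMod 2) x).coeff 1 = Algebra.trace (ZMod 2) K x :=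
  ⟨coeff_finrank_sub_one_minpoly hx.adjoin_eq_top,
    (coeff_one_minpoly hx.adjoin_eq_top hx.ne_zero).trans hx.trace_inv⟩

theorem exists_minpoly_chain (hx : IsBalancedGenerator x) (htr : Algebra.trace (ZMod 2) K x = 0)
    (hper : ¬ThetaPeriodic x) {n l m : ℕ} (hm : Odd m) (hn : n = 2 ^ l * m)
    (hfinrank : Module.finrank (ZMod 2) K = n) :
    ∃ (s : ℕ) (P : ℕ → (ZMod 2)[X]),
      1 ≤ s ∧ s ≤ l + 1 ∧ P 0 = minpoly (ZMod 2) x ∧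
      (∀ i ≤ s, (P i).Monic ∧ Irreducible (P i) ∧ (P i).natDegree = n) ∧
      (∀ i < s, P (i + 1) ∣ Qtrans (P i)) ∧
      (∀ i < s, (P i).coeff (n - 1) = 0 ∧ (P i).coeff 1 = 0) ∧
      ((P s).coeff (n - 1) = 1 ∧ (P s).coeff 1 = 1) := by
  obtain ⟨s, hs, b, rfl, hb, htheta, hzero, hone⟩ :=
    hx.exists_backward_orbit hper hm (hfinrank.trans hn)
  subst hfinrank
  refine ⟨s, fun i ↦ minpoly (ZMod 2) (b i), ?_, hs, rfl, fun i hi ↦ (hb i hi).minpoly_spec,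
    fun i hi ↦ ?_, fun i hi ↦ ?_, ?_⟩
  · rw [Nat.one_le_iff_ne_zero]
    rintro rfl
    exact zero_ne_one (htr.symm.trans hone)
  · dsimp only
    rw [← htheta i hi]
    exact minpoly_dvd_Qtrans_minpoly_theta (hb (i + 1) hi).ne_zero
  · rw [← hzero i hi]
    exact (hb i hi.le).minpoly_coeff_eq_trace
  · rw [← hone]
    exact (hb s le_rfl).minpoly_coeff_eq_trace

end IsBalancedGenerator

end Descent

theorem stmt_7_general {K : Type*} [Field K] [Algebra (ZMod 2) K] {n l m : ℕ} (hm : Odd m)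
    (hn : n = 2 ^ l * m) {p₀ : (ZMod 2)[X]} (hmon : p₀.Monic) (hirr : Irreducible p₀)
    (hdeg : p₀.natDegree = n) (hD : p₀.coeff (n - 1) = 0 ∧ p₀.coeff 1 = 0) {α : K}
    (hroot : aeval α p₀ = 0) (hper : ¬ThetaPeriodic α) :
    ∃ (s : ℕ) (P : ℕ → (ZMod 2)[X]),
      1 ≤ s ∧ s ≤ l + 1 ∧ P 0 = p₀ ∧
      (∀ i ≤ s, (P i).Monic ∧ Irreducible (P i) ∧ (P i).natDegree = n) ∧
      (∀ i < s, P (i + 1) ∣ Qtrans (P i)) ∧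
      (∀ i < s, (P i).coeff (n - 1) = 0 ∧ (P i).coeff 1 = 0) ∧
      ((P s).coeff (n - 1) = 1 ∧ (P s).coeff 1 = 1) := by
  let L := IntermediateField.adjoin (ZMod 2) {α}
  let β : L := IntermediateField.AdjoinSimple.gen (ZMod 2) α
  have hint : IsIntegral (ZMod 2) α := ⟨p₀, hmon, by rwa [← aeval_def]⟩
  have : FiniteDimensional (ZMod 2) L := IntermediateField.adjoin.finiteDimensional hint
  have : Finite L := Module.finite_of_finite (ZMod 2)
  obtain rfl : p₀ = minpoly (ZMod 2) β := by
    rw [IntermediateField.minpoly_gen]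
    exact minpoly.eq_of_irreducible_of_monic hirr hroot hmon
  have hfinrank : Module.finrank (ZMod 2) L = n := by
    rw [IntermediateField.adjoin.finrank hint, ← IntermediateField.minpoly_gen, hdeg]
  have hgen : IntermediateField.adjoin (ZMod 2) {β} = ⊤ := by
    rw [Field.primitive_element_iff_minpoly_natDegree_eq, hdeg, hfinrank]
  have hβper : ¬ThetaPeriodic β := fun h ↦ hper (h.map (algebraMap L K))
  have hβ0 : β ≠ 0 := fun h ↦ hβper (h ▸ thetaPeriodic_zero L)
  rw [← hfinrank, coeff_finrank_sub_one_minpoly hgen, coeff_one_minpoly hgen hβ0] at hD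
  exact IsBalancedGenerator.exists_minpoly_chain ⟨hβ0, hgen, hD.2.trans hD.1.symm⟩ hD.1 hβper hm hn
    hfinrank

theorem stmt_7 (n' l' m' : ℕ) (hn : 1 ≤ n') (hm : Odd m') (hfact : n' = 2 ^ l' * m')
    (p₀ : Polynomial (ZMod 2)) (hmon : p₀.Monic) (hirr : Irreducible p₀)
    (hdeg : p₀.natDegree = n')
    (hD : p₀.coeff (n' - 1) = 0 ∧ p₀.coeff 1 = 0)
    (α : GaloisField 2 n') (hroot : Polynomial.aeval α p₀ = 0)
    (hper : ¬ ThetaPeriodic α) :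
    ∃ (s' : ℕ) (P : ℕ → Polynomial (ZMod 2)),
      1 ≤ s' ∧ s' ≤ l' + 1 ∧ P 0 = p₀ ∧
      (∀ i ≤ s', (P i).Monic ∧ Irreducible (P i) ∧ (P i).natDegree = n') ∧
      (∀ i < s', P (i + 1) ∣ Qtrans (P i)) ∧
      (∀ i < s', (P i).coeff (n' - 1) = 0 ∧ (P i).coeff 1 = 0) ∧
      ((P s').coeff (n' - 1) = 1 ∧ (P s').coeff 1 = 1) :=
  stmt_7_general hm hfact hmon hirr hdeg hD hroot hper
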